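/- Let L ≥ 1 be an integer, Λ > 0, and let U, V be Borel probability distributions on [0,Λ] with E[U^j] = E[V^j] for all j ∈ {1,…,L}. Let D ∈ ℕ and θ, λ ∈ (ℝ_{≥0})^D, and define α ∈ (ℝ_{≥0})^D coordinatewise by α_i := θ_i²/(Λ·θ_i + λ_i), with α_i := 0 when Λ·θ_i + λ_i = 0. Then ‖ E_{u←U}[Poi⃗(u·θ + λ)] − E_{v←V}[Poi⃗(v·θ + λ)] ‖²_TV ≤ Σ_{z=L+1}^∞ (Λ²·‖α‖₁)^z / z!, where ‖α‖₁ = Σ_{i=1}^D α_i. -/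

import Mathlib

open MeasureTheory

/-- The Poisson pmf with mean `μ` at `k`. -/
noncomputable def poiP (μ : ℝ) (k : ℕ) : ℝ := Real.exp (-μ) * μ ^ k / (Nat.factorial k)

/-- The mixture over `u ← U` of the product Poisson distribution
`Poi⃗(u·θ + λ)`, as a pmf on `ℕ^D`. -/
noncomputable def poiMix {D : ℕ} (U : Measure ℝ) (θ lam : Fin D → ℝ)
    (m : Fin D → ℕ) : ℝ :=
  ∫ u, ∏ i, poiP (u * θ i + lam i) (m i) ∂U

lemma aux_exp_hasSum (x : ℝ) : HasSum (fun n : ℕ => x ^ n / (Nat.factorial n : ℝ)) (Real.exp x) := by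
  rw [Real.exp_eq_exp_ℝ]
  exact NormedSpace.expSeries_div_hasSum_exp x

lemma aux_pi_hasSum (D : ℕ) (f : Fin D → ℕ → ℝ) (s : Fin D → ℝ) (hf : ∀ i k, 0 ≤ f i k)
    (h : ∀ i, HasSum (f i) (s i)) :
    HasSum (fun m : Fin D → ℕ => ∏ i, f i (m i)) (∏ i, s i) := by
  induction D with
  | zero => simp
  | succ n ih =>
    have h1 := ih (fun i => f i.succ) (fun i => s i.succ) (fun i k => hf _ _) (fun i => h _)
    have h0 := h 0
    have hg : ∀ m : Fin n → ℕ, 0 ≤ ∏ i, f i.succ (m i) :=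
      fun m => Finset.prod_nonneg fun i _ => hf i.succ (m i)
    have hsm := Summable.mul_of_nonneg h0.summable h1.summable (fun k => hf 0 k) hg
    have h2 := h0.mul h1 hsm
    rw [← (Fin.consEquiv (fun _ : Fin (n + 1) => ℕ)).hasSum_iff, Fin.prod_univ_succ]
    convert! h2 using 1
    funext x
    simp [Fin.consEquiv, Fin.prod_univ_succ]

lemma aux_tail (f g : ℕ → ℝ) (X : ℝ) (n : ℕ) (hf : HasSum f X) (hg : Summable g)
    (h0 : ∀ z, z < n → f z = 0) (hle : ∀ z, f z ≤ g z) : X ≤ ∑' z, g (z + n) := by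
  have hs := hf.summable.sum_add_tsum_nat_add n
  rw [hf.tsum_eq, Finset.sum_eq_zero (fun z hz => h0 z (Finset.mem_range.1 hz)), zero_add] at hs
  rw [← hs]
  exact Summable.tsum_le_tsum (fun z => hle _) ((summable_nat_add_iff n).2 hf.summable)
    ((summable_nat_add_iff n).2 hg)

lemma aux_poiP_nonneg {x : ℝ} (hx : 0 ≤ x) (k : ℕ) : 0 ≤ poiP x k := by
  unfold poiP; positivity

lemma aux_one (x y b : ℝ) (hb : 0 ≤ b) (hx : b = 0 → x = 0) (hy : b = 0 → y = 0) :
    HasSum (fun k => poiP x k * poiP y k / poiP b k) (Real.exp ((b - x) * (b - y) / b)) := by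
  rcases hb.eq_or_lt with h0 | hpos
  · have hb0 := h0.symm
    rw [hx hb0, hy hb0, hb0]
    have := hasSum_single (f := fun k => poiP 0 k * poiP 0 k / poiP 0 k) 0 (by
      intro k hk; simp [poiP, hk])
    simpa [poiP] using this
  · have h := (aux_exp_hasSum (x * y / b)).mul_left (Real.exp (b - x - y))
    rw [← Real.exp_add] at h
    convert! h using 1
    · funext k
      unfold poiP
      have e : Real.exp (b - x - y) = Real.exp (-x) * Real.exp (-y) / Real.exp (-b) := by
        rw [← Real.exp_add, ← Real.exp_sub]; congr 1; ring
      rw [e, div_pow, mul_pow]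
      have : (Nat.factorial k : ℝ) ≠ 0 := by positivity
      field_simp
    · congr 1; field_simp; ring

/-- product Poisson pmf along the ray -/
noncomputable def auxP {D : ℕ} (θ lam : Fin D → ℝ) (u : ℝ) (m : Fin D → ℕ) : ℝ :=
  ∏ i, poiP (u * θ i + lam i) (m i)

section
variable {D : ℕ} {θ lam : Fin D → ℝ} {Λ : ℝ}

lemma auxP_nonneg (hθ : ∀ i, 0 ≤ θ i) (hlam : ∀ i, 0 ≤ lam i) {u : ℝ} (hu : 0 ≤ u)
    (m : Fin D → ℕ) : 0 ≤ auxP θ lam u m :=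
  Finset.prod_nonneg fun i _ => aux_poiP_nonneg
    (add_nonneg (mul_nonneg hu (hθ i)) (hlam i)) _

lemma auxP_hasSum (hΛ : 0 < Λ) (hθ : ∀ i, 0 ≤ θ i) (hlam : ∀ i, 0 ≤ lam i) {u v : ℝ}
    (hu : 0 ≤ u) (hv : 0 ≤ v) :
    HasSum (fun m => auxP θ lam u m * auxP θ lam v m / auxP θ lam Λ m)
      (Real.exp ((Λ - u) * (Λ - v) * ∑ i, θ i ^ 2 / (Λ * θ i + lam i))) := by
  have hz : ∀ i, Λ * θ i + lam i = 0 → θ i = 0 ∧ lam i = 0 := by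
    intro i hi
    have h1 := mul_nonneg hΛ.le (hθ i)
    have h2 := hlam i
    have h3 : Λ * θ i = 0 := by linarith
    rcases mul_eq_zero.1 h3 with h | h
    · exact absurd h hΛ.ne'
    · exact ⟨h, by linarith⟩
  have hn : ∀ w, 0 ≤ w → ∀ i, 0 ≤ w * θ i + lam i := fun w hw i =>
    add_nonneg (mul_nonneg hw (hθ i)) (hlam i)
  have h := aux_pi_hasSum D
    (fun i k => poiP (u * θ i + lam i) k * poiP (v * θ i + lam i) k / poiP (Λ * θ i + lam i) k)
    (fun i => Real.exp ((Λ * θ i + lam i - (u * θ i + lam i)) *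
      (Λ * θ i + lam i - (v * θ i + lam i)) / (Λ * θ i + lam i)))
    (fun i k => div_nonneg (mul_nonneg (aux_poiP_nonneg (hn u hu i) k)
      (aux_poiP_nonneg (hn v hv i) k)) (aux_poiP_nonneg (hn Λ hΛ.le i) k))
    (fun i => aux_one _ _ _ (hn Λ hΛ.le i)
      (fun h => by simp [hz i h]) (fun h => by simp [hz i h]))
  convert! h using 1
  · funext m
    simp only [auxP, Finset.prod_div_distrib, Finset.prod_mul_distrib]
  · rw [← Real.exp_sum, Finset.mul_sum]
    congr 1
    refine Finset.sum_congr rfl fun i _ => ?_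
    ring

lemma auxP_le (hθ : ∀ i, 0 ≤ θ i) (hlam : ∀ i, 0 ≤ lam i) {u : ℝ}
    (hu : u ∈ Set.Icc 0 Λ) (m : Fin D → ℕ) :
    auxP θ lam u m ≤ Real.exp (∑ i, Λ * θ i) * auxP θ lam Λ m := by
  unfold auxP
  rw [Real.exp_sum, ← Finset.prod_mul_distrib]
  refine Finset.prod_le_prod (fun i _ => aux_poiP_nonneg
    (add_nonneg (mul_nonneg hu.1 (hθ i)) (hlam i)) _) fun i _ => ?_
  unfold poiP
  have h0 : 0 ≤ u * θ i + lam i := add_nonneg (mul_nonneg hu.1 (hθ i)) (hlam i)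
  have h1 : u * θ i + lam i ≤ Λ * θ i + lam i := by
    have := mul_le_mul_of_nonneg_right hu.2 (hθ i); linarith
  have e : Real.exp (Λ * θ i) * (Real.exp (-(Λ * θ i + lam i)) * (Λ * θ i + lam i) ^ m i
      / (Nat.factorial (m i) : ℝ)) =
      Real.exp (-lam i) * (Λ * θ i + lam i) ^ m i / (Nat.factorial (m i) : ℝ) := by
    have : Real.exp (-lam i) = Real.exp (Λ * θ i) * Real.exp (-(Λ * θ i + lam i)) := by
      rw [← Real.exp_add]; congr 1; ring
    rw [this]; ring
  rw [e]
  have h2 : Real.exp (-(u * θ i + lam i)) ≤ Real.exp (-lam i) := by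
    apply Real.exp_le_exp.2
    have := mul_nonneg hu.1 (hθ i); linarith
  gcongr

lemma auxP_cont (m : Fin D → ℕ) : Continuous (fun u => auxP θ lam u m) := by
  unfold auxP poiP
  fun_prop

lemma aux_sum_q (hΛ : 0 < Λ) (hθ : ∀ i, 0 ≤ θ i) (hlam : ∀ i, 0 ≤ lam i) :
    HasSum (auxP θ lam Λ) 1 := by
  have h := auxP_hasSum hΛ hθ hlam hΛ.le hΛ.le
  simpa using h

lemma aux_ae (A B : Measure ℝ) [IsProbabilityMeasure A] [IsProbabilityMeasure B]
    (hA : ∀ᵐ u ∂A, u ∈ Set.Icc 0 Λ) (hB : ∀ᵐ u ∂B, u ∈ Set.Icc 0 Λ) :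
    ∀ᵐ w ∂(A.prod B), w.1 ∈ Set.Icc 0 Λ ∧ w.2 ∈ Set.Icc 0 Λ := by
  have h1 := Measure.quasiMeasurePreserving_fst (μ := A) (ν := B) |>.ae hA
  have h2 := Measure.quasiMeasurePreserving_snd (μ := A) (ν := B) |>.ae hB
  filter_upwards [h1, h2] with w h h' using ⟨h, h'⟩

lemma aux_kernel (hΛ : 0 < Λ) (hθ : ∀ i, 0 ≤ θ i) (hlam : ∀ i, 0 ≤ lam i)
    (A B : Measure ℝ) [IsProbabilityMeasure A] [IsProbabilityMeasure B]
    (hA : ∀ᵐ u ∂A, u ∈ Set.Icc 0 Λ) (hB : ∀ᵐ u ∂B, u ∈ Set.Icc 0 Λ) :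
    HasSum (fun m => poiMix A θ lam m * poiMix B θ lam m / auxP θ lam Λ m)
      (∫ w, Real.exp ((Λ - w.1) * (Λ - w.2) * ∑ i, θ i ^ 2 / (Λ * θ i + lam i)) ∂(A.prod B)) := by
  set C := Real.exp (∑ i, Λ * θ i) with hC
  have hs : Summable fun m => C * C * auxP θ lam Λ m :=
    (aux_sum_q hΛ hθ hlam).summable.mul_left _
  have h := hasSum_integral_of_dominated_convergence (μ := A.prod B)
    (F := fun m w => auxP θ lam w.1 m * auxP θ lam w.2 m / auxP θ lam Λ m)
    (f := fun w => Real.exp ((Λ - w.1) * (Λ - w.2) * ∑ i, θ i ^ 2 / (Λ * θ i + lam i)))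
    (fun m _ => C * C * auxP θ lam Λ m)
    (fun m => by
      have hc := auxP_cont (θ := θ) (lam := lam) m
      exact (((hc.comp continuous_fst).mul (hc.comp continuous_snd)).div_const _).aestronglyMeasurable)
    (fun m => by
      filter_upwards [aux_ae A B hA hB] with w hw
      have q0 := auxP_nonneg hθ hlam hΛ.le m
      have a0 := auxP_nonneg hθ hlam hw.1.1 m
      have b0 := auxP_nonneg hθ hlam hw.2.1 m
      rw [Real.norm_of_nonneg (by positivity)]
      have a1 := auxP_le hθ hlam hw.1 m
      have b1 := auxP_le hθ hlam hw.2 m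
      rcases q0.eq_or_lt with h0 | hpos
      · simp [← h0]
      · rw [div_le_iff₀ hpos]
        calc _ ≤ (C * auxP θ lam Λ m) * (C * auxP θ lam Λ m) := by gcongr
          _ = _ := by ring)
    (Filter.Eventually.of_forall fun _ => hs)
    (integrable_const _)
    (by
      filter_upwards [aux_ae A B hA hB] with w hw
      exact auxP_hasSum hΛ hθ hlam hw.1.1 hw.2.1)
  convert! h using 1
  funext m
  rw [integral_div, integral_prod_mul (fun u => auxP θ lam u m) (fun u => auxP θ lam u m)]
  rfl

lemma aux_moment (a : ℝ) (A B : Measure ℝ) [IsProbabilityMeasure A] [IsProbabilityMeasure B]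
    (hA : ∀ᵐ u ∂A, u ∈ Set.Icc 0 Λ) (hB : ∀ᵐ u ∂B, u ∈ Set.Icc 0 Λ) :
    HasSum (fun z : ℕ => a ^ z / (Nat.factorial z : ℝ) *
        ((∫ u, (Λ - u) ^ z ∂A) * ∫ u, (Λ - u) ^ z ∂B))
      (∫ w, Real.exp ((Λ - w.1) * (Λ - w.2) * a) ∂(A.prod B)) := by
  have h := hasSum_integral_of_dominated_convergence (μ := A.prod B)
    (F := fun (z : ℕ) w => a ^ z / (Nat.factorial z : ℝ) * ((Λ - w.1) ^ z * (Λ - w.2) ^ z))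
    (f := fun w => Real.exp ((Λ - w.1) * (Λ - w.2) * a))
    (fun z _ => (|a| * Λ * Λ) ^ z / (Nat.factorial z : ℝ))
    (fun z => by
      apply Continuous.aestronglyMeasurable
      fun_prop)
    (fun z => by
      filter_upwards [aux_ae A B hA hB] with w hw
      have h1 : |Λ - w.1| ≤ Λ := by
        rw [abs_of_nonneg (by linarith [hw.1.2])]; linarith [hw.1.1]
      have h2 : |Λ - w.2| ≤ Λ := by
        rw [abs_of_nonneg (by linarith [hw.2.2])]; linarith [hw.2.1]
      have h3 : 0 ≤ Λ := (abs_nonneg _).trans h1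
      simp only [Real.norm_eq_abs, abs_mul, abs_div, abs_pow, Nat.abs_cast]
      calc _ ≤ |a| ^ z / (Nat.factorial z : ℝ) * (Λ ^ z * Λ ^ z) := by gcongr
        _ = _ := by rw [mul_pow, mul_pow]; ring)
    (Filter.Eventually.of_forall fun _ => (aux_exp_hasSum _).summable)
    (integrable_const _)
    (Filter.Eventually.of_forall fun w => by
      have := aux_exp_hasSum ((Λ - w.1) * (Λ - w.2) * a)
      convert! this using 1
      funext z
      rw [mul_pow, mul_pow]; ring)
  convert! h using 1
  funext z
  rw [integral_const_mul, integral_prod_mul (fun u => (Λ - u) ^ z) (fun u => (Λ - u) ^ z)]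

lemma aux_integrable (A : Measure ℝ) [IsProbabilityMeasure A]
    (hA : ∀ᵐ u ∂A, u ∈ Set.Icc 0 Λ) (f : ℝ → ℝ) (hf : Continuous f) : Integrable f A := by
  obtain ⟨C, hC⟩ := (isCompact_Icc (a := (0 : ℝ)) (b := Λ)).exists_bound_of_continuousOn
    hf.continuousOn
  refine Integrable.of_bound hf.aestronglyMeasurable C ?_
  filter_upwards [hA] with u hu using hC u hu

lemma aux_mom_eq (L : ℕ) (U V : Measure ℝ) [IsProbabilityMeasure U] [IsProbabilityMeasure V]
    (hU : ∀ᵐ u ∂U, u ∈ Set.Icc 0 Λ) (hV : ∀ᵐ u ∂V, u ∈ Set.Icc 0 Λ)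
    (hmom : ∀ j : ℕ, 1 ≤ j → j ≤ L → ∫ u, u ^ j ∂U = ∫ v, v ^ j ∂V) (z : ℕ) (hz : z ≤ L) :
    ∫ u, (Λ - u) ^ z ∂U = ∫ u, (Λ - u) ^ z ∂V := by
  have key : ∀ A : Measure ℝ, IsProbabilityMeasure A → (∀ᵐ u ∂A, u ∈ Set.Icc 0 Λ) →
      ∫ u, (Λ - u) ^ z ∂A = ∑ j ∈ Finset.range (z + 1),
        ((-1) ^ j * Λ ^ (z - j) * (z.choose j : ℝ)) * ∫ u, u ^ j ∂A := by
    intro A _ hA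
    have e : ∀ u : ℝ, (Λ - u) ^ z = ∑ j ∈ Finset.range (z + 1),
        ((-1) ^ j * Λ ^ (z - j) * (z.choose j : ℝ)) * u ^ j := by
      intro u
      rw [sub_eq_neg_add, add_pow]
      refine Finset.sum_congr rfl fun j _ => ?_
      rw [neg_pow]; ring
    simp only [e]
    rw [integral_finsetSum _ fun j _ => aux_integrable A hA _ (by fun_prop)]
    simp only [integral_const_mul]
  rw [key U inferInstance hU, key V inferInstance hV]
  refine Finset.sum_congr rfl fun j hj => ?_
  rcases Nat.eq_zero_or_pos j with h0 | hp
  · subst h0; simp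
  · rw [hmom j hp (by have := Finset.mem_range.1 hj; omega)]

lemma aux_mom_bound (A : Measure ℝ) [IsProbabilityMeasure A]
    (hA : ∀ᵐ u ∂A, u ∈ Set.Icc 0 Λ) (z : ℕ) :
    0 ≤ ∫ u, (Λ - u) ^ z ∂A ∧ ∫ u, (Λ - u) ^ z ∂A ≤ Λ ^ z := by
  constructor
  · apply integral_nonneg_of_ae
    filter_upwards [hA] with u hu
    have : 0 ≤ Λ - u := by linarith [hu.2]
    simp only [Pi.zero_apply]
    positivity
  · have : ∫ u, (Λ - u) ^ z ∂A ≤ ∫ u, Λ ^ z ∂A := by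
      apply integral_mono_ae (aux_integrable A hA _ (by fun_prop)) (integrable_const _)
      filter_upwards [hA] with u hu
      exact pow_le_pow_left₀ (by linarith [hu.2]) (by linarith [hu.1]) _
    simpa using this

lemma aux_ae_of (A : Measure ℝ) [IsProbabilityMeasure A] (h : A (Set.Icc 0 Λ) = 1) :
    ∀ᵐ u ∂A, u ∈ Set.Icc 0 Λ := (mem_ae_iff_prob_eq_one measurableSet_Icc).2 h

end

/-- moment-matching bound with `α_i = θ_i²/(Λθ_i + λ_i)`
(interpreted as `0` when the denominator vanishes, which is Lean's convention
for division by zero). -/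
theorem stmt_16 (L : ℕ) (hL : 1 ≤ L) (Λ : ℝ) (hΛ : 0 < Λ)
    (U V : Measure ℝ) [IsProbabilityMeasure U] [IsProbabilityMeasure V]
    (hUsupp : U (Set.Icc 0 Λ) = 1) (hVsupp : V (Set.Icc 0 Λ) = 1)
    (hmom : ∀ j : ℕ, 1 ≤ j → j ≤ L → ∫ u, u ^ j ∂U = ∫ v, v ^ j ∂V)
    (D : ℕ) (θ lam : Fin D → ℝ) (hθ : ∀ i, 0 ≤ θ i) (hlam : ∀ i, 0 ≤ lam i) :
    ((1 / 2) * ∑' m : Fin D → ℕ, |poiMix U θ lam m - poiMix V θ lam m|) ^ 2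
      ≤ ∑' z : ℕ, (Λ ^ 2 * ∑ i, θ i ^ 2 / (Λ * θ i + lam i)) ^ (z + L + 1) /
          (Nat.factorial (z + L + 1) : ℝ) := by
  have hU := aux_ae_of U hUsupp
  have hV := aux_ae_of V hVsupp
  set a := ∑ i, θ i ^ 2 / (Λ * θ i + lam i) with ha
  have ha0 : 0 ≤ a := Finset.sum_nonneg fun i _ => div_nonneg (sq_nonneg _)
    (add_nonneg (mul_nonneg hΛ.le (hθ i)) (hlam i))
  set q := auxP θ lam Λ with hq
  set d := fun m => poiMix U θ lam m - poiMix V θ lam m with hd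
  have hq0 : ∀ m, 0 ≤ q m := fun m => auxP_nonneg hθ hlam hΛ.le m
  obtain ⟨X, hX1, hX2⟩ : ∃ X : ℝ, HasSum (fun m => d m ^ 2 / q m) X ∧
      HasSum (fun z : ℕ => a ^ z / (Nat.factorial z : ℝ) *
        ((∫ u, (Λ - u) ^ z ∂U) - ∫ u, (Λ - u) ^ z ∂V) ^ 2) X := by
    have h := ((aux_moment a U U hU hU).sub ((aux_moment a U V hU hV).mul_left 2)).add
        (aux_moment a V V hV hV)
    have h' := ((aux_kernel hΛ hθ hlam U U hU hU).sub
        ((aux_kernel hΛ hθ hlam U V hU hV).mul_left 2)).add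
        (aux_kernel hΛ hθ hlam V V hV hV)
    have e' : (fun m => d m ^ 2 / q m) = fun m =>
        poiMix U θ lam m * poiMix U θ lam m / auxP θ lam Λ m -
        2 * (poiMix U θ lam m * poiMix V θ lam m / auxP θ lam Λ m) +
        poiMix V θ lam m * poiMix V θ lam m / auxP θ lam Λ m :=
      funext fun m => by simp only [hd, hq]; ring
    refine ⟨_, e' ▸ h', ?_⟩
    convert! h using 1
    funext z
    ring
  have hterm0 : ∀ m, 0 ≤ d m ^ 2 / q m := fun m => div_nonneg (sq_nonneg _) (hq0 m)
  have hX0 : 0 ≤ X := hX1.nonneg hterm0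
  have hXle : X ≤ ∑' z : ℕ, (Λ ^ 2 * a) ^ (z + L + 1) / (Nat.factorial (z + L + 1) : ℝ) := by
    refine aux_tail _ (fun z => (Λ ^ 2 * a) ^ z / (Nat.factorial z : ℝ)) X (L + 1) hX2
      (aux_exp_hasSum (Λ ^ 2 * a)).summable (fun z hz => ?_) (fun z => ?_)
    · rw [aux_mom_eq L U V hU hV hmom z (by omega)]
      simp
    · obtain ⟨u0, u1⟩ := aux_mom_bound U hU z
      obtain ⟨v0, v1⟩ := aux_mom_bound V hV z
      have hsq : ((∫ u, (Λ - u) ^ z ∂U) - ∫ u, (Λ - u) ^ z ∂V) ^ 2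
          ≤ (Λ ^ z) ^ 2 := sq_le_sq' (by linarith) (by linarith)
      calc _ ≤ a ^ z / (Nat.factorial z : ℝ) * (Λ ^ z) ^ 2 :=
            mul_le_mul_of_nonneg_left hsq (by positivity)
        _ = _ := by rw [mul_pow]; ring
  have hdq : ∀ m, q m = 0 → d m = 0 := by
    intro m hm
    have key : ∀ A : Measure ℝ, (∀ᵐ u ∂A, u ∈ Set.Icc 0 Λ) → poiMix A θ lam m = 0 := by
      intro A hA
      apply integral_eq_zero_of_ae
      filter_upwards [hA] with u hu
      have h1 := auxP_le hθ hlam hu m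
      have h2 := auxP_nonneg hθ hlam hu.1 m
      rw [show auxP θ lam Λ m = 0 from hm, mul_zero] at h1
      exact le_antisymm h1 h2
    simp only [hd]
    rw [key U hU, key V hV, sub_zero]
  have hqs := aux_sum_q hΛ hθ hlam
  have hfin : ∑' m, |d m| ≤ Real.sqrt X := by
    refine Real.tsum_le_of_sum_le (fun m => abs_nonneg _) fun F => ?_
    apply Real.le_sqrt_of_sq_le
    have hcs := Finset.sum_sq_le_sum_mul_sum_of_sq_eq_mul F (r := fun m => |d m|)
      (f := fun m => d m ^ 2 / q m) (g := q) (fun m _ => hterm0 m) (fun m _ => hq0 m)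
      (fun m _ => by
        rw [sq_abs]
        by_cases h : q m = 0
        · simp [h, hdq m h]
        · field_simp)
    have h1 := sum_le_hasSum F (fun m _ => hterm0 m) hX1
    have h2 := sum_le_hasSum F (fun m _ => hq0 m) hqs
    have h3 : 0 ≤ ∑ m ∈ F, q m := Finset.sum_nonneg fun m _ => hq0 m
    calc _ ≤ _ := hcs
      _ ≤ X * 1 := mul_le_mul h1 h2 h3 hX0
      _ = X := mul_one X
  have hT0 : 0 ≤ ∑' m, |d m| := tsum_nonneg fun m => abs_nonneg _
  have hT : (∑' m, |d m|) ^ 2 ≤ X := by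
    calc _ ≤ (Real.sqrt X) ^ 2 := by gcongr
      _ = X := Real.sq_sqrt hX0
  refine le_trans ?_ hXle
  change ((1 / 2) * ∑' m, |d m|) ^ 2 ≤ X
  rw [mul_pow]
  nlinarith [sq_nonneg (∑' m, |d m|)]
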